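/- The images under Ψ̄ of the monomials c₁^{a₁}c₂^{a₂}r^{ε}d₁^{b₁}d₂^{b₂}w^{c}, with a₁, b₁, c ∈ ℕ₀, a₂, b₂ ∈ ℤ and ε ∈ {0,1}, are linearly independent over ℂ in 𝒟q(GL₂); in particular the homomorphism Ψ̄: ℬ → 𝒟q(GL₂) is injective. -/

import Mathlib

noncomputable section

/-- Generators `a¹₁, a¹₂, a²₁, a²₂, ∂¹₁, ∂¹₂, ∂²₁, ∂²₂` of the algebra
`𝒟q⁺(GL₂)` of quantum differential operators. -/
inductive QLGen : Type
  | a11 | a12 | a21 | a22 | p11 | p12 | p21 | p22 | ai | di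

abbrev FQL : Type := FreeAlgebra ℂ QLGen

def gQL : QLGen → FQL := FreeAlgebra.ι ℂ

/-- The defining relations of `𝒟q⁺(GL₂)`. -/
inductive QLRel (q : ℂ) : FQL → FQL → Prop
  -- the six `a`-relations
  | a1 : QLRel q (gQL .a12 * gQL .a11)
      (gQL .a11 * gQL .a12 + (1 - q⁻¹ ^ 2) • (gQL .a12 * gQL .a22))
  | a2 : QLRel q (gQL .a22 * gQL .a11) (gQL .a11 * gQL .a22)
  | a3 : QLRel q (gQL .a21 * gQL .a11)
      (gQL .a11 * gQL .a21 - (1 - q⁻¹ ^ 2) • (gQL .a22 * gQL .a21))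
  | a4 : QLRel q (gQL .a22 * gQL .a12) ((q ^ 2) • (gQL .a12 * gQL .a22))
  | a5 : QLRel q (gQL .a21 * gQL .a12)
      (gQL .a12 * gQL .a21 + (1 - q⁻¹ ^ 2) • (gQL .a11 * gQL .a22 - gQL .a22 * gQL .a22))
  | a6 : QLRel q (gQL .a22 * gQL .a21) ((q⁻¹ ^ 2) • (gQL .a21 * gQL .a22))
  -- the six `∂`-relations
  | p1 : QLRel q (gQL .p12 * gQL .p11)
      (gQL .p11 * gQL .p12 + (1 - q⁻¹ ^ 2) • (gQL .p12 * gQL .p22))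
  | p2 : QLRel q (gQL .p22 * gQL .p11) (gQL .p11 * gQL .p22)
  | p3 : QLRel q (gQL .p21 * gQL .p11)
      (gQL .p11 * gQL .p21 - (1 - q⁻¹ ^ 2) • (gQL .p22 * gQL .p21))
  | p4 : QLRel q (gQL .p22 * gQL .p12) ((q ^ 2) • (gQL .p12 * gQL .p22))
  | p5 : QLRel q (gQL .p21 * gQL .p12)
      (gQL .p12 * gQL .p21 + (1 - q⁻¹ ^ 2) • (gQL .p11 * gQL .p22 - gQL .p22 * gQL .p22))
  | p6 : QLRel q (gQL .p22 * gQL .p21) ((q⁻¹ ^ 2) • (gQL .p21 * gQL .p22))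
  -- the sixteen cross relations
  | c1 : QLRel q (gQL .p11 * gQL .a11)
      (-((1 - q⁻¹ ^ 2) • (gQL .p12 * gQL .a21)) + (q⁻¹ ^ 2) • (gQL .a11 * gQL .p11)
        + (q⁻¹ ^ 2 - q⁻¹ ^ 4) • (gQL .a12 * gQL .p21))
  | c2 : QLRel q (gQL .p11 * gQL .a12)
      ((q⁻¹ ^ 2 - 1) • (gQL .p12 * gQL .a22) + (q⁻¹ ^ 2) • (gQL .a12 * gQL .p11))
  | c3 : QLRel q (gQL .p11 * gQL .a21)
      ((1 - q ^ 2) • (gQL .p21 * gQL .a11) - ((q - q⁻¹) ^ 2) • (gQL .p22 * gQL .a21)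
        + gQL .a21 * gQL .p11 + (1 - q⁻¹ ^ 2) • (gQL .a22 * gQL .p21))
  | c4 : QLRel q (gQL .p11 * gQL .a22)
      ((1 - q ^ 2) • (gQL .p21 * gQL .a12) - ((q - q⁻¹) ^ 2) • (gQL .p22 * gQL .a22)
        + gQL .a22 * gQL .p11)
  | c5 : QLRel q (gQL .p12 * gQL .a11)
      (gQL .a11 * gQL .p12 + (1 - q⁻¹ ^ 2) • (gQL .a12 * gQL .p22)
        + (q⁻¹ ^ 2 - 1) • (gQL .a12 * gQL .p11))
  | c6 : QLRel q (gQL .p12 * gQL .a12) ((q⁻¹ ^ 2) • (gQL .a12 * gQL .p12))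
  | c7 : QLRel q (gQL .p12 * gQL .a21)
      ((q⁻¹ ^ 2 - 1) • (gQL .p22 * gQL .a11) + gQL .a21 * gQL .p12
        + (q⁻¹ ^ 2 - 1) • (gQL .a22 * gQL .p11) + (1 - q⁻¹ ^ 2) • (gQL .a22 * gQL .p22))
  | c8 : QLRel q (gQL .p12 * gQL .a22)
      ((q⁻¹ ^ 2 - 1) • (gQL .p22 * gQL .a12) + (q⁻¹ ^ 2) • (gQL .a22 * gQL .p12))
  | c9 : QLRel q (gQL .p21 * gQL .a11)
      ((q⁻¹ ^ 2) • (gQL .a11 * gQL .p21) - (1 - q⁻¹ ^ 2) • (gQL .p22 * gQL .a21))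
  | c10 : QLRel q (gQL .p21 * gQL .a12)
      ((q⁻¹ ^ 2 - 1) • (gQL .p22 * gQL .a22) + gQL .a12 * gQL .p21)
  | c11 : QLRel q (gQL .p21 * gQL .a21) ((q⁻¹ ^ 2) • (gQL .a21 * gQL .p21))
  | c12 : QLRel q (gQL .p21 * gQL .a22) (gQL .a22 * gQL .p21)
  | c13 : QLRel q (gQL .p22 * gQL .a11)
      (gQL .a11 * gQL .p22 + (1 - q ^ 2) • (gQL .a12 * gQL .p21))
  | c14 : QLRel q (gQL .p22 * gQL .a12) (gQL .a12 * gQL .p22)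
  | c15 : QLRel q (gQL .p22 * gQL .a21)
      ((q⁻¹ ^ 2) • (gQL .a21 * gQL .p22) + (q⁻¹ ^ 2 - 1) • (gQL .a22 * gQL .p21))
  | c16 : QLRel q (gQL .p22 * gQL .a22) ((q⁻¹ ^ 2) • (gQL .a22 * gQL .p22))

  -- the localization relations: `ai` and `di` are two-sided inverses of
  -- `det_q(A)` and `det_q(D)` respectively
  | invA1 : QLRel q (gQL .ai * (gQL .a11 * gQL .a22 - (q ^ 2) • (gQL .a12 * gQL .a21))) 1
  | invA2 : QLRel q ((gQL .a11 * gQL .a22 - (q ^ 2) • (gQL .a12 * gQL .a21)) * gQL .ai) 1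
  | invD1 : QLRel q (gQL .di * (gQL .p11 * gQL .p22 - (q ^ 2) • (gQL .p12 * gQL .p21))) 1
  | invD2 : QLRel q ((gQL .p11 * gQL .p22 - (q ^ 2) • (gQL .p12 * gQL .p21)) * gQL .di) 1

/-- The algebra `𝒟q⁺(GL₂)` of quantum differential operators on `GL₂`. -/
abbrev DqLoc (q : ℂ) : Type := RingQuot (QLRel q)

def a11 (q : ℂ) : DqLoc q := RingQuot.mkAlgHom ℂ (QLRel q) (gQL .a11)
def a12 (q : ℂ) : DqLoc q := RingQuot.mkAlgHom ℂ (QLRel q) (gQL .a12)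
def a21 (q : ℂ) : DqLoc q := RingQuot.mkAlgHom ℂ (QLRel q) (gQL .a21)
def a22 (q : ℂ) : DqLoc q := RingQuot.mkAlgHom ℂ (QLRel q) (gQL .a22)
def p11 (q : ℂ) : DqLoc q := RingQuot.mkAlgHom ℂ (QLRel q) (gQL .p11)
def p12 (q : ℂ) : DqLoc q := RingQuot.mkAlgHom ℂ (QLRel q) (gQL .p12)
def p21 (q : ℂ) : DqLoc q := RingQuot.mkAlgHom ℂ (QLRel q) (gQL .p21)
def p22 (q : ℂ) : DqLoc q := RingQuot.mkAlgHom ℂ (QLRel q) (gQL .p22)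

/-- The quantum determinant `det_q(A) = a¹₁a²₂ − q²a¹₂a²₁`. -/
def detA (q : ℂ) : DqLoc q := a11 q * a22 q - (q ^ 2) • (a12 q * a21 q)

/-- The quantum determinant `det_q(D) = ∂¹₁∂²₂ − q²∂¹₂∂²₁`. -/
def detD (q : ℂ) : DqLoc q := p11 q * p22 q - (q ^ 2) • (p12 q * p21 q)

/-- The inverse `det_q(A)⁻¹`. -/
def ai (q : ℂ) : DqLoc q := RingQuot.mkAlgHom ℂ (QLRel q) (gQL .ai)

/-- The inverse `det_q(D)⁻¹`. -/
def di (q : ℂ) : DqLoc q := RingQuot.mkAlgHom ℂ (QLRel q) (gQL .di)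

/-- The matrix `A = (a^i_j)`. -/
def Amat (q : ℂ) : Matrix (Fin 2) (Fin 2) (DqLoc q) :=
  !![a11 q, a12 q; a21 q, a22 q]

/-- The matrix `D = (∂^i_j)`. -/
def Dmat (q : ℂ) : Matrix (Fin 2) (Fin 2) (DqLoc q) :=
  !![p11 q, p12 q; p21 q, p22 q]

/-- The quantum adjugate matrix `Ã = [[a²₂, −q²a¹₂], [−q²a²₁, q²a¹₁ + (1−q²)a²₂]]`. -/
def Atil (q : ℂ) : Matrix (Fin 2) (Fin 2) (DqLoc q) :=
  !![a22 q, -((q ^ 2) • a12 q); -((q ^ 2) • a21 q), (q ^ 2) • a11 q + (1 - q ^ 2) • a22 q]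

/-- The quantum adjugate matrix `D̃ = [[∂²₂, −q²∂¹₂], [−q²∂²₁, q²∂¹₁ + (1−q²)∂²₂]]`. -/
def Dtil (q : ℂ) : Matrix (Fin 2) (Fin 2) (DqLoc q) :=
  !![p22 q, -((q ^ 2) • p12 q); -((q ^ 2) • p21 q), (q ^ 2) • p11 q + (1 - q ^ 2) • p22 q]

/-- The inverse matrix `A⁻¹ = det_q(A)⁻¹·Ã`. -/
def Ainv (q : ℂ) : Matrix (Fin 2) (Fin 2) (DqLoc q) := fun i j => ai q * Atil q i j

/-- The inverse matrix `D⁻¹ = det_q(D)⁻¹·D̃`. -/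
def Dinv (q : ℂ) : Matrix (Fin 2) (Fin 2) (DqLoc q) := fun i j => di q * Dtil q i j

/-- Generators of the algebra `ℬ`: `c₁, c₂, c₂⁻¹, d₁, d₂, d₂⁻¹, r, w`. -/
inductive BGen : Type
  | c1 | c2 | c2i | d1 | d2 | d2i | r | w

abbrev FB : Type := FreeAlgebra ℂ BGen

def gB : BGen → FB := FreeAlgebra.ι ℂ

/-- The defining relations of the algebra `ℬ`. -/
inductive BRel (q : ℂ) : FB → FB → Prop
  | c2c2i : BRel q (gB .c2 * gB .c2i) 1
  | c2ic2 : BRel q (gB .c2i * gB .c2) 1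
  | d2d2i : BRel q (gB .d2 * gB .d2i) 1
  | d2id2 : BRel q (gB .d2i * gB .d2) 1
  | c2c1 : BRel q (gB .c2 * gB .c1) (gB .c1 * gB .c2)
  | d2d1 : BRel q (gB .d2 * gB .d1) (gB .d1 * gB .d2)
  | d2c2 : BRel q (gB .d2 * gB .c2) ((q⁻¹ ^ 4) • (gB .c2 * gB .d2))
  | d2c1 : BRel q (gB .d2 * gB .c1) ((q⁻¹ ^ 2) • (gB .c1 * gB .d2))
  | d1c2 : BRel q (gB .d1 * gB .c2) ((q⁻¹ ^ 2) • (gB .c2 * gB .d1))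
  | d1c1 : BRel q (gB .d1 * gB .c1) (gB .c1 * gB .d1 + (q⁻¹ ^ 2 - 1) • gB .r)
  | d2r : BRel q (gB .d2 * gB .r) ((q⁻¹ ^ 2) • (gB .r * gB .d2))
  | rc2 : BRel q (gB .r * gB .c2) ((q⁻¹ ^ 2) • (gB .c2 * gB .r))
  | d1r : BRel q (gB .d1 * gB .r)
      ((q⁻¹ ^ 2) • (gB .r * gB .d1) + ((1 - q⁻¹ ^ 2) * q⁻¹ ^ 2) • (gB .c1 * gB .d2))
  | rc1 : BRel q (gB .r * gB .c1)
      ((q⁻¹ ^ 2) • (gB .c1 * gB .r) + ((1 - q⁻¹ ^ 2) * q⁻¹ ^ 2) • (gB .c2 * gB .d1))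
  | rr : BRel q (gB .r * gB .r)
      ((q⁻¹ ^ 4) • gB .w + (q⁻¹ ^ 4 + q⁻¹ ^ 6) • (gB .c2 * gB .d2)
        - (q⁻¹ ^ 4) • (gB .c2 * gB .d1 * gB .d1)
        - (q⁻¹ ^ 4) • (gB .c1 * gB .c1 * gB .d2)
        + (q⁻¹ ^ 2) • (gB .c1 * gB .r * gB .d1))
  | wr : BRel q (gB .w * gB .r) (gB .r * gB .w)
  | wc1 : BRel q (gB .w * gB .c1) ((q⁻¹ ^ 2) • (gB .c1 * gB .w))
  | wc2 : BRel q (gB .w * gB .c2) ((q⁻¹ ^ 4) • (gB .c2 * gB .w))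
  | wd1 : BRel q (gB .w * gB .d1) ((q ^ 2) • (gB .d1 * gB .w))
  | wd2 : BRel q (gB .w * gB .d2) ((q ^ 4) • (gB .d2 * gB .w))

/-- The algebra `ℬ`. -/
abbrev AlgB (q : ℂ) : Type := RingQuot (BRel q)

def bc1 (q : ℂ) : AlgB q := RingQuot.mkAlgHom ℂ (BRel q) (gB .c1)
def bc2 (q : ℂ) : AlgB q := RingQuot.mkAlgHom ℂ (BRel q) (gB .c2)
def bc2i (q : ℂ) : AlgB q := RingQuot.mkAlgHom ℂ (BRel q) (gB .c2i)
def bd1 (q : ℂ) : AlgB q := RingQuot.mkAlgHom ℂ (BRel q) (gB .d1)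
def bd2 (q : ℂ) : AlgB q := RingQuot.mkAlgHom ℂ (BRel q) (gB .d2)
def bd2i (q : ℂ) : AlgB q := RingQuot.mkAlgHom ℂ (BRel q) (gB .d2i)
def br (q : ℂ) : AlgB q := RingQuot.mkAlgHom ℂ (BRel q) (gB .r)
def bw (q : ℂ) : AlgB q := RingQuot.mkAlgHom ℂ (BRel q) (gB .w)

/-- Integer powers of an element `x` with designated inverse `xi`:
negative exponents are interpreted via the inverse generator. -/
def zp {M : Type*} [Monoid M] (x xi : M) : ℤ → M
  | Int.ofNat n => x ^ n
  | Int.negSucc n => xi ^ (n + 1)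

/-- `c₁ := tr_q(A) = a¹₁ + q⁻²a²₂`. -/
def c1El (q : ℂ) : DqLoc q := a11 q + (q⁻¹ ^ 2) • a22 q
/-- `d₁ := tr_q(D) = ∂¹₁ + q⁻²∂²₂`. -/
def d1El (q : ℂ) : DqLoc q := p11 q + (q⁻¹ ^ 2) • p22 q
/-- `r := q²·tr_q(DA)`. -/
def rEl (q : ℂ) : DqLoc q :=
  (q ^ 2) • ((Dmat q * Amat q) 0 0 + (q⁻¹ ^ 2) • (Dmat q * Amat q) 1 1)
/-- `w := tr_q(DÃD̃A)`. -/
def wEl (q : ℂ) : DqLoc q :=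
  (Dmat q * Atil q * Dtil q * Amat q) 0 0
    + (q⁻¹ ^ 2) • (Dmat q * Atil q * Dtil q * Amat q) 1 1

/-- The PBW family `c₁^{a₁}c₂^{a₂}r^{ε}d₁^{b₁}d₂^{b₂}w^{c}` of `ℬ`, indexed by
`a₁, b₁, c ∈ ℕ`, `a₂, b₂ ∈ ℤ`, `ε ∈ {0,1}`. -/
def pbwB (q : ℂ) : ℕ × ℤ × Fin 2 × ℕ × ℤ × ℕ → AlgB q :=
  fun x => bc1 q ^ x.1 * zp (bc2 q) (bc2i q) x.2.1 * br q ^ (x.2.2.1 : ℕ) *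
    bd1 q ^ x.2.2.2.1 * zp (bd2 q) (bd2i q) x.2.2.2.2.1 * bw q ^ x.2.2.2.2.2


/-! ### A quantum torus of rank eight -/

abbrev EE : Type := ℤ × ℤ × ℤ × ℤ × ℤ × ℤ × ℤ × ℤ

def bet : EE → EE → ℤ
  | (_, e1, e2, e3, e4, e5, e6, e7), (f0, f1, f2, f3, f4, f5, f6, _) =>
    e1 * (-f0) + e2 * (-f0) + e3 * f2 + e4 * f3 + e5 * (-f0 - f1 - f2 - f3)
      + e6 * (f2 + f3 + f5) + e7 * (-f0 - f1 - f4 - 2 * f6)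

theorem bet_add_left (e f g : EE) : bet (e + f) g = bet e g + bet f g := by
  obtain ⟨_, _, _, _, _, _, _, _⟩ := e
  obtain ⟨_, _, _, _, _, _, _, _⟩ := f
  obtain ⟨_, _, _, _, _, _, _, _⟩ := g
  simp only [bet]; ring

theorem bet_add_right (e f g : EE) : bet e (f + g) = bet e f + bet e g := by
  obtain ⟨_, _, _, _, _, _, _, _⟩ := e
  obtain ⟨_, _, _, _, _, _, _, _⟩ := f
  obtain ⟨_, _, _, _, _, _, _, _⟩ := g
  simp only [bet]; ring

theorem bet_zero_right (e : EE) : bet e 0 = 0 := by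
  have := bet_add_right e 0 0
  simpa using this

theorem bet_zero_left (e : EE) : bet 0 e = 0 := by
  have := bet_add_left 0 0 e
  simpa using this

abbrev MM : Type := EE →₀ ℂ

/-- The monomial operators. -/
def TT (q : ℂ) (e : EE) : Module.End ℂ MM :=
  Finsupp.linearCombination ℂ (fun n => Finsupp.single (e + n) ((q ^ 2) ^ (bet e n)))

theorem TT_single (q : ℂ) (e n : EE) (x : ℂ) :
    TT q e (Finsupp.single n x) = Finsupp.single (e + n) (x * (q ^ 2) ^ (bet e n)) := by
  simp [TT, Finsupp.linearCombination_single]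

theorem TT_mul (q : ℂ) (hq : q ≠ 0) (e f : EE) :
    TT q e * TT q f = ((q ^ 2) ^ (bet e f)) • TT q (e + f) := by
  have h2 : q ^ 2 ≠ 0 := pow_ne_zero _ hq
  apply Finsupp.lhom_ext
  intro n x
  rw [Module.End.mul_apply, LinearMap.smul_apply, TT_single, TT_single, TT_single,
    Finsupp.smul_single, bet_add_right, bet_add_left, zpow_add₀ h2, zpow_add₀ h2, add_assoc]
  congr 1
  simp only [smul_eq_mul]; ring

theorem TT_zero (q : ℂ) : TT q 0 = 1 := by
  apply Finsupp.lhom_ext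
  intro n x
  rw [TT_single, bet_zero_left]; simp

/-- The images of the generators in the quantum torus. -/
def gim {R : Type} [Ring R] [Algebra ℂ R] (T : EE → R) (q : ℂ) : QLGen → R
  | .a11 => T (0, 0, 0, 0, 1, 0, 0, 0) + T (0, 1, -1, 1, 0, 0, 0, 0)
      + (q⁻¹ ^ 4) • T (0, -1, 1, -1, 0, 0, 1, 0) + (-q⁻¹ ^ 2) • T (1, 0, 0, 0, 0, 0, 0, 0)
  | .a12 => T (0, 1, 0, 0, 0, 0, 0, 0)
  | .a21 => T (1, -1, 0, 0, 1, 0, 0, 0) + T (1, 0, -1, 1, 0, 0, 0, 0)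
      + (q⁻¹ ^ 4) • T (1, -2, 1, -1, 0, 0, 1, 0) + (-1 : ℂ) • T (2, -1, 0, 0, 0, 0, 0, 0)
      + (-q⁻¹ ^ 2) • T (0, -1, 0, 0, 0, 0, 1, 0)
  | .a22 => T (1, 0, 0, 0, 0, 0, 0, 0)
  | .p11 => T (0, 0, -1, 1, 0, 1, 0, 0) + (-1 : ℂ) • T (1, -1, 0, 0, 0, 1, 0, 0)
      + (-q⁻¹ ^ 4) • T (0, -1, 0, -1, -1, 0, 1, 1) + (q⁻¹ ^ 6) • T (1, -2, 1, -2, -1, 0, 1, 1)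
      + (q⁻¹ ^ 2) • T (1, -1, 0, -1, 0, 0, 0, 1) + (q ^ 2) • T (-1, 1, 0, 1, 0, 0, 0, 0)
      + (-q⁻¹ ^ 2) • T (0, 0, 1, 0, 0, 0, 0, 0)
  | .p12 => T (0, 0, 0, 0, 0, 1, 0, 0) + (-q⁻¹ ^ 6) • T (0, -1, 1, -2, -1, 0, 1, 1)
      + (-q⁻¹ ^ 2) • T (0, 0, 0, -1, 0, 0, 0, 1) + (q ^ 2) • T (-1, 1, 1, 0, 0, 0, 0, 0)
  | .p21 => T (0, 0, 0, 1, 0, 0, 0, 0) + (-q⁻¹ ^ 2) • T (1, -1, 1, 0, 0, 0, 0, 0)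
  | .p22 => T (0, 0, 1, 0, 0, 0, 0, 0)
  | .ai => T (0, 0, 0, 0, 0, 0, -1, 0)
  | .di => T (0, 0, 0, 0, 0, 0, 0, -1)

theorem gim_detA {R : Type} [Ring R] [Algebra ℂ R] (T : EE → R)
    (q : ℂ) (hq : q ≠ 0) (hT : ∀ e f, T e * T f = ((q ^ 2) ^ (bet e f)) • T (e + f)) :
    gim T q .a11 * gim T q .a22 - (q ^ 2) • (gim T q .a12 * gim T q .a21)
      = T (0, 0, 0, 0, 0, 0, 1, 0) := by
  simp only [gim, mul_add, add_mul, mul_smul_comm, smul_mul_assoc, smul_add,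
    smul_smul, hT, Prod.mk_add_mk, bet]
  norm_num
  match_scalars <;> field_simp <;> norm_num

theorem gim_detD {R : Type} [Ring R] [Algebra ℂ R] (T : EE → R)
    (q : ℂ) (hq : q ≠ 0) (hT : ∀ e f, T e * T f = ((q ^ 2) ^ (bet e f)) • T (e + f)) :
    gim T q .p11 * gim T q .p22 - (q ^ 2) • (gim T q .p12 * gim T q .p21)
      = T (0, 0, 0, 0, 0, 0, 0, 1) := by
  simp only [gim, mul_add, add_mul, mul_smul_comm, smul_mul_assoc, smul_add,
    smul_smul, hT, Prod.mk_add_mk, bet]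
  norm_num
  match_scalars <;> field_simp <;> norm_num

set_option linter.unusedSimpArgs false in
set_option linter.unreachableTactic false in
set_option linter.unusedTactic false in
set_option maxHeartbeats 4000000 in
theorem gim_rel {R : Type} [Ring R] [Algebra ℂ R] (T : EE → R)
    (q : ℂ) (hq : q ≠ 0) (hT : ∀ e f, T e * T f = ((q ^ 2) ^ (bet e f)) • T (e + f)) (hT0 : T 0 = 1)
    ⦃x y : FQL⦄ (h : QLRel q x y) :
    FreeAlgebra.lift ℂ (gim T q) x = FreeAlgebra.lift ℂ (gim T q) y := by
  cases h
  case invA1 =>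
    simp only [gQL, map_mul, map_sub, map_smul, map_one, FreeAlgebra.lift_ι_apply, gim_detA T q hq hT]
    simp only [gim, hT, Prod.mk_add_mk, bet]
    norm_num
    exact hT0
  case invA2 =>
    simp only [gQL, map_mul, map_sub, map_smul, map_one, FreeAlgebra.lift_ι_apply, gim_detA T q hq hT]
    simp only [gim, hT, Prod.mk_add_mk, bet]
    norm_num
    exact hT0
  case invD1 =>
    simp only [gQL, map_mul, map_sub, map_smul, map_one, FreeAlgebra.lift_ι_apply, gim_detD T q hq hT]
    simp only [gim, hT, Prod.mk_add_mk, bet]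
    norm_num
    exact hT0
  case invD2 =>
    simp only [gQL, map_mul, map_sub, map_smul, map_one, FreeAlgebra.lift_ι_apply, gim_detD T q hq hT]
    simp only [gim, hT, Prod.mk_add_mk, bet]
    norm_num
    exact hT0
  all_goals
    simp only [gQL, map_mul, map_add, map_sub, map_neg, map_smul, FreeAlgebra.lift_ι_apply]
    simp only [gim, mul_add, add_mul, mul_smul_comm, smul_mul_assoc, smul_add,
      smul_smul, hT, Prod.mk_add_mk, bet]
    norm_num
    try (match_scalars <;> field_simp <;> ring)

/-! ### Triangularity and linear independence -/

theorem tri_aux {ι κ : Type} (f : ι → κ →₀ ℂ) (φ : ι → κ)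
    (hφ : Function.Injective φ) (deg : κ → ℤ)
    (h : ∀ x, f x (φ x) ≠ 0 ∧ ∀ y, deg (φ x) ≤ deg y → y ≠ φ x → f x y = 0) :
    LinearIndependent ℂ f := by
  classical
  rw [linearIndependent_iff']
  intro s g hs
  by_contra hcon
  push Not at hcon
  obtain ⟨i, his, hgi⟩ := hcon
  have hne : (s.filter (fun x => g x ≠ 0)).Nonempty := ⟨i, by simp [his, hgi]⟩
  obtain ⟨m, hm, hmax⟩ := Finset.exists_max_image _ (fun x => deg (φ x)) hne
  have hm' := Finset.mem_filter.1 hm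
  have h0 := DFunLike.congr_fun hs (φ m)
  rw [Finsupp.finsetSum_apply, Finset.sum_eq_single m] at h0
  · simp only [Finsupp.smul_apply, smul_eq_mul, Finsupp.coe_zero, Pi.zero_apply] at h0
    exact (mul_ne_zero hm'.2 (h m).1) h0
  · intro b hb hbm
    by_cases hgb : g b = 0
    · simp [hgb]
    · have := hmax b (by simp [hb, hgb])
      have h2 := (h b).2 (φ m) this (fun hh => hbm (hφ hh.symm))
      simp [h2]
  · intro hh; exact absurd hm'.1 hh

theorem tri {ι κ V : Type} [AddCommGroup V] [Module ℂ V] (N : κ → V)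
    (hN : LinearIndependent ℂ N) (f : ι → V) (φ : ι → κ)
    (hφ : Function.Injective φ) (deg : κ → ℤ)
    (h : ∀ x, ∃ u : ℂ, u ≠ 0 ∧
      f x - u • N (φ x) ∈ Submodule.span ℂ (N '' {y | deg y < deg (φ x)})) :
    LinearIndependent ℂ f := by
  classical
  have hinj : LinearMap.ker (Finsupp.linearCombination ℂ N) = ⊥ :=
    LinearMap.ker_eq_bot.2 hN
  obtain ⟨G, hG⟩ := LinearMap.exists_leftInverse_of_injective _ hinj
  have hGN : ∀ y, G (N y) = Finsupp.single y 1 := by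
    intro y
    have := LinearMap.congr_fun hG (Finsupp.single y 1)
    simpa using this
  apply LinearIndependent.of_comp G
  apply tri_aux _ φ hφ deg
  intro x
  obtain ⟨u, hu, hx⟩ := h x
  have key : ∀ v ∈ Submodule.span ℂ (N '' {y | deg y < deg (φ x)}),
      ∀ y, deg (φ x) ≤ deg y → G v y = 0 := by
    intro v hv y hy
    induction hv using Submodule.span_induction with
    | mem v hv =>
      obtain ⟨z, hz, rfl⟩ := hv
      rw [hGN]
      apply Finsupp.single_eq_of_ne
      rintro rfl
      exact absurd hz (not_lt.2 hy)
    | zero => simp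
    | add a b _ _ ha hb => simp [ha, hb]
    | smul c a _ ha => simp [ha]
  have e : ∀ y, deg (φ x) ≤ deg y → G (f x) y = u * (Finsupp.single (φ x) (1 : ℂ)) y := by
    intro y hy
    have := key _ hx y hy
    rw [map_sub, map_smul, hGN, Finsupp.sub_apply, sub_eq_zero] at this
    rw [this]; rfl
  refine ⟨?_, ?_⟩
  · change G (f x) (φ x) ≠ 0
    rw [e _ le_rfl]; simpa using hu
  · intro y hy hne
    change G (f x) y = 0
    rw [e _ hy, Finsupp.single_eq_of_ne hne, mul_zero]

theorem TT_li (q : ℂ) : LinearIndependent ℂ (TT q) := by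
  let ev : Module.End ℂ MM →ₗ[ℂ] MM := LinearMap.applyₗ (Finsupp.single 0 1)
  apply LinearIndependent.of_comp ev
  have : (ev ∘ TT q) = fun e => Finsupp.single e (1 : ℂ) := by
    funext e
    simp [ev, TT_single, bet_zero_right]
  rw [this]
  exact Finsupp.linearIndependent_single_one ℂ EE

theorem exists_torus (q : ℂ) (hq : q ≠ 0) :
    ∃ (E : Type) (_ : Ring E) (_ : Algebra ℂ E) (T : EE → E),
      (∀ e f, T e * T f = ((q ^ 2) ^ (bet e f)) • T (e + f)) ∧ T 0 = 1 ∧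
      LinearIndependent ℂ T :=
  ⟨Module.End ℂ MM, inferInstance, inferInstance, TT q, TT_mul q hq, TT_zero q, TT_li q⟩

section torus
variable {E : Type} [Ring E] [Algebra ℂ E]

def ell (e : EE) : ℤ := e.2.2.1 - e.1

theorem ell_add (e f : EE) : ell (e + f) = ell e + ell f := by
  simp [ell]; ring

def Low (T : EE → E) (n : ℤ) : Submodule ℂ (E) :=
  Submodule.span ℂ (T '' {f | ell f < n})

theorem Low_mono (T : EE → E) {m n : ℤ} (h : m ≤ n) : Low T m ≤ Low T n := by
  apply Submodule.span_mono
  apply Set.image_mono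
  intro f hf
  exact lt_of_lt_of_le hf h

theorem TT_mem_Low (T : EE → E) {e : EE} {n : ℤ} (h : ell e < n) : T e ∈ Low T n :=
  Submodule.subset_span ⟨e, h, rfl⟩

theorem Low_mul (T : EE → E) (q : ℂ)
    (hT : ∀ e f, T e * T f = ((q ^ 2) ^ (bet e f)) • T (e + f)) {m n : ℤ} {P Q : E}
    (hP : P ∈ Low T m) (hQ : Q ∈ Low T n) : P * Q ∈ Low T (m + n - 1) := by
  have : Low T m * Low T n ≤ Low T (m + n - 1) := by
    unfold Low
    rw [Submodule.span_mul_span, Submodule.span_le]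
    rintro _ ⟨_, ⟨e, he, rfl⟩, _, ⟨f, hf, rfl⟩, rfl⟩
    simp only [hT]
    apply Submodule.smul_mem
    apply TT_mem_Low
    rw [ell_add]
    simp only [Set.mem_ofPred_eq] at he hf
    omega
  exact this (Submodule.mul_mem_mul hP hQ)

def HasLead (T : EE → E) (P : E) (e : EE) : Prop :=
  ∃ u : ℂ, u ≠ 0 ∧ P - u • T e ∈ Low T (ell e)

theorem HasLead.TT (T : EE → E) (e : EE) : HasLead T (T e) e :=
  ⟨1, one_ne_zero, by rw [one_smul, sub_self]; exact Submodule.zero_mem _⟩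

theorem HasLead.one (T : EE → E) (hT0 : T 0 = 1) : HasLead T 1 0 := by
  rw [← hT0]; exact HasLead.TT T 0

theorem HasLead.mul {T : EE → E} {q : ℂ} (hq : q ≠ 0)
    (hT : ∀ e f, T e * T f = ((q ^ 2) ^ (bet e f)) • T (e + f)) {P Q : E} {e f : EE}
    (hP : HasLead T P e) (hQ : HasLead T Q f) : HasLead T (P * Q) (e + f) := by
  obtain ⟨u, hu, hP⟩ := hP
  obtain ⟨v, hv, hQ⟩ := hQ
  refine ⟨u * v * (q ^ 2) ^ (bet e f),
    mul_ne_zero (mul_ne_zero hu hv) (zpow_ne_zero _ (pow_ne_zero _ hq)), ?_⟩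
  have e1 : P * Q - (u * v * (q ^ 2) ^ (bet e f)) • T (e + f)
      = (P - u • T e) * (Q - v • T f)
        + (P - u • T e) * (v • T f)
        + (u • T e) * (Q - v • T f) := by
    have : (u • T e) * (v • T f)
        = (u * v * (q ^ 2) ^ (bet e f)) • T (e + f) := by
      rw [smul_mul_smul_comm, hT, smul_smul]
    rw [← this]
    have h : ∀ X Y : E,
        P * Q - X * Y = (P - X) * (Q - Y) + (P - X) * Y + X * (Q - Y) := by
      intro X Y
      simp only [mul_sub, sub_mul]
      abel
    exact h _ _
  rw [e1, ell_add]
  have hTe : u • T e ∈ Low T (ell e + 1) :=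
    Submodule.smul_mem _ _ (TT_mem_Low T (by omega))
  have hTf : v • T f ∈ Low T (ell f + 1) :=
    Submodule.smul_mem _ _ (TT_mem_Low T (by omega))
  refine Submodule.add_mem _ (Submodule.add_mem _ ?_ ?_) ?_
  · exact Low_mono T (by omega) (Low_mul T q hT hP hQ)
  · exact Low_mono T (by omega) (Low_mul T q hT hP hTf)
  · exact Low_mono T (by omega) (Low_mul T q hT hTe hQ)

theorem HasLead.pow {T : EE → E} {q : ℂ} (hq : q ≠ 0)
    (hT : ∀ e f, T e * T f = ((q ^ 2) ^ (bet e f)) • T (e + f)) (hT0 : T 0 = 1)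
    {P : E} {e : EE}
    (hP : HasLead T P e) (n : ℕ) : HasLead T (P ^ n) (n • e) := by
  induction n with
  | zero => simpa using HasLead.one T hT0
  | succ n ih => rw [pow_succ, succ_nsmul]; exact ih.mul hq hT hP

theorem HasLead.zp {T : EE → E} {q : ℂ} (hq : q ≠ 0)
    (hT : ∀ e f, T e * T f = ((q ^ 2) ^ (bet e f)) • T (e + f)) (hT0 : T 0 = 1)
    {P Pi : E} {e : EE}
    (hP : HasLead T P e) (hPi : HasLead T Pi (-e)) (n : ℤ) :
    HasLead T (zp P Pi n) (n • e) := by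
  cases n with
  | ofNat n => simpa [_root_.zp] using hP.pow hq hT hT0 n
  | negSucc n =>
    have := hPi.pow hq hT hT0 (n + 1)
    have e1 : (n + 1) • (-e) = (Int.negSucc n) • e := by
      rw [negSucc_zsmul, smul_neg]
    rw [e1] at this
    exact this

/-! ### The homomorphism to the torus -/

def Phi (T : EE → E) (q : ℂ) (hq : q ≠ 0)
    (hT : ∀ e f, T e * T f = ((q ^ 2) ^ (bet e f)) • T (e + f)) (hT0 : T 0 = 1) : DqLoc q →ₐ[ℂ] E :=
  RingQuot.liftAlgHom ℂ ⟨FreeAlgebra.lift ℂ (gim T q),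
    gim_rel T q hq hT hT0⟩

theorem Phi_gen (T : EE → E) (q : ℂ) (hq : q ≠ 0)
    (hT : ∀ e f, T e * T f = ((q ^ 2) ^ (bet e f)) • T (e + f)) (hT0 : T 0 = 1) (g : QLGen) :
    Phi T q hq hT hT0 (RingQuot.mkAlgHom ℂ (QLRel q) (gQL g)) = gim T q g := by
  rw [Phi, RingQuot.liftAlgHom_mkAlgHom_apply, gQL, FreeAlgebra.lift_ι_apply]

theorem gim_c1 {R : Type} [Ring R] [Algebra ℂ R] (T : EE → R) (q : ℂ) :
    gim T q .a11 + (q⁻¹ ^ 2) • gim T q .a22 =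
      (q⁻¹ ^ 4) • T (0, -1, 1, -1, 0, 0, 1, 0) +
        (T (0, 0, 0, 0, 1, 0, 0, 0) + T (0, 1, -1, 1, 0, 0, 0, 0)) := by
  simp only [gim]
  module

theorem gim_d1 {R : Type} [Ring R] [Algebra ℂ R] (T : EE → R) (q : ℂ) :
    gim T q .p11 + (q⁻¹ ^ 2) • gim T q .p22 =
      (q ^ 2) • T (-1, 1, 0, 1, 0, 0, 0, 0) +
      (T (0, 0, -1, 1, 0, 1, 0, 0) + (-1 : ℂ) • T (1, -1, 0, 0, 0, 1, 0, 0)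
      + (-q⁻¹ ^ 4) • T (0, -1, 0, -1, -1, 0, 1, 1) + (q⁻¹ ^ 6) • T (1, -2, 1, -2, -1, 0, 1, 1)
      + (q⁻¹ ^ 2) • T (1, -1, 0, -1, 0, 0, 0, 1)) := by
  simp only [gim]
  module

theorem gim_r {R : Type} [Ring R] [Algebra ℂ R] (T : EE → R)
    (q : ℂ) (hq : q ≠ 0) (hT : ∀ e f, T e * T f = ((q ^ 2) ^ (bet e f)) • T (e + f)) :
    (q ^ 2) • ((gim T q .p11 * gim T q .a11 + gim T q .p12 * gim T q .a21)
      + (q⁻¹ ^ 2) • (gim T q .p21 * gim T q .a12 + gim T q .p22 * gim T q .a22)) =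
      (q ^ 4) • T (-1, 1, 0, 1, 1, 0, 0, 0) +
      ((q ^ 2) • T (0, 0, -1, 1, 1, 1, 0, 0) + (q⁻¹ ^ 2) • T (0, 1, -2, 2, 0, 1, 0, 0)
      + (-1 : ℂ) • T (1, 0, -1, 1, 0, 1, 0, 0) + (-q⁻¹ ^ 4) • T (0, 0, -1, 0, -1, 0, 1, 1)
      + (q⁻¹ ^ 4) • T (1, -1, 0, -1, -1, 0, 1, 1)
      + (q ^ 2) • T (-1, 2, -1, 2, 0, 0, 0, 0)) := by
  simp only [gim, mul_add, add_mul, mul_smul_comm, smul_mul_assoc, smul_add,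
    smul_smul, hT, Prod.mk_add_mk, bet]
  norm_num
  match_scalars <;> field_simp <;> ring

def ec1 : EE := (0, -1, 1, -1, 0, 0, 1, 0)
def ed1 : EE := (-1, 1, 0, 1, 0, 0, 0, 0)
def er : EE := (-1, 1, 0, 1, 1, 0, 0, 0)
def ec2 : EE := (0, 0, 0, 0, 0, 0, 1, 0)
def ed2 : EE := (0, 0, 0, 0, 0, 0, 0, 1)

theorem lead_c1 (T : EE → E) (q : ℂ) (hq : q ≠ 0)
    (hT : ∀ e f, T e * T f = ((q ^ 2) ^ (bet e f)) • T (e + f)) (hT0 : T 0 = 1) : HasLead T (Phi T q hq hT hT0 (c1El q)) ec1 := by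
  rw [c1El, a11, a22, map_add, map_smul, Phi_gen, Phi_gen, gim_c1]
  refine ⟨q⁻¹ ^ 4, pow_ne_zero _ (inv_ne_zero hq), ?_⟩
  rw [ec1, add_sub_cancel_left]
  refine Submodule.add_mem _ ?_ ?_ <;> exact TT_mem_Low T (by simp [ell])

theorem lead_d1 (T : EE → E) (q : ℂ) (hq : q ≠ 0)
    (hT : ∀ e f, T e * T f = ((q ^ 2) ^ (bet e f)) • T (e + f)) (hT0 : T 0 = 1) : HasLead T (Phi T q hq hT hT0 (d1El q)) ed1 := by
  rw [d1El, p11, p22, map_add, map_smul, Phi_gen, Phi_gen, gim_d1]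
  refine ⟨q ^ 2, pow_ne_zero _ hq, ?_⟩
  rw [ed1, add_sub_cancel_left]
  refine Submodule.add_mem _ (Submodule.add_mem _ (Submodule.add_mem _
    (Submodule.add_mem _ ?_ ?_) ?_) ?_) ?_ <;>
    (try apply Submodule.smul_mem) <;> exact TT_mem_Low T (by simp [ell])

theorem lead_r (T : EE → E) (q : ℂ) (hq : q ≠ 0)
    (hT : ∀ e f, T e * T f = ((q ^ 2) ^ (bet e f)) • T (e + f)) (hT0 : T 0 = 1) : HasLead T (Phi T q hq hT hT0 (rEl q)) er := by
  have h0 : rEl q = (q ^ 2) • ((p11 q * a11 q + p12 q * a21 q)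
      + (q⁻¹ ^ 2) • (p21 q * a12 q + p22 q * a22 q)) := by
    simp [rEl, Dmat, Amat, Matrix.mul_apply, Fin.sum_univ_two]
  rw [h0]
  simp only [a11, a12, a21, a22, p11, p12, p21, p22, map_add, map_smul, map_mul, Phi_gen]
  rw [gim_r T q hq hT]
  refine ⟨q ^ 4, pow_ne_zero _ hq, ?_⟩
  rw [er, add_sub_cancel_left]
  refine Submodule.add_mem _ (Submodule.add_mem _ (Submodule.add_mem _ (Submodule.add_mem _
    (Submodule.add_mem _ ?_ ?_) ?_) ?_) ?_) ?_ <;>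
    (try apply Submodule.smul_mem) <;> exact TT_mem_Low T (by simp [ell])

theorem Phi_detA (T : EE → E) (q : ℂ) (hq : q ≠ 0)
    (hT : ∀ e f, T e * T f = ((q ^ 2) ^ (bet e f)) • T (e + f)) (hT0 : T 0 = 1) : Phi T q hq hT hT0 (detA q) = T ec2 := by
  rw [detA, a11, a22, a12, a21, map_sub, map_smul, map_mul, map_mul]
  simp only [Phi_gen]
  exact gim_detA T q hq hT

theorem Phi_detD (T : EE → E) (q : ℂ) (hq : q ≠ 0)
    (hT : ∀ e f, T e * T f = ((q ^ 2) ^ (bet e f)) • T (e + f)) (hT0 : T 0 = 1) : Phi T q hq hT hT0 (detD q) = T ed2 := by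
  rw [detD, p11, p22, p12, p21, map_sub, map_smul, map_mul, map_mul]
  simp only [Phi_gen]
  exact gim_detD T q hq hT

theorem TT_inv (T : EE → E) (q : ℂ)
    (hT : ∀ e f, T e * T f = ((q ^ 2) ^ (bet e f)) • T (e + f)) (hT0 : T 0 = 1)
    (e : EE) (he : bet e (-e) = 0) (x : E) (hx : x * T e = 1) : x = T (-e) := by
  have h : T e * T (-e) = 1 := by
    rw [hT, he, add_neg_cancel, hT0]; simp
  calc x = x * (T e * T (-e)) := by rw [h, mul_one]
    _ = T (-e) := by rw [← mul_assoc, hx, one_mul]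

end torus

/-! ### The algebra `ℬ` -/

structure BData (R : Type) [Ring R] [Algebra ℂ R] (q : ℂ) where
  c1 : R
  c2 : Rˣ
  d1 : R
  d2 : Rˣ
  r : R
  w : R
  c2c1 : (c2 : R) * c1 = c1 * c2
  d2d1 : (d2 : R) * d1 = d1 * d2
  d2c2 : (d2 : R) * c2 = (q⁻¹ ^ 4) • ((c2 : R) * d2)
  d2c1 : (d2 : R) * c1 = (q⁻¹ ^ 2) • (c1 * d2)
  d1c2 : d1 * c2 = (q⁻¹ ^ 2) • (c2 * d1)
  d1c1 : d1 * c1 = c1 * d1 + (q⁻¹ ^ 2 - 1) • r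
  d2r : d2 * r = (q⁻¹ ^ 2) • (r * d2)
  rc2 : r * c2 = (q⁻¹ ^ 2) • (c2 * r)
  d1r : d1 * r = (q⁻¹ ^ 2) • (r * d1) + ((1 - q⁻¹ ^ 2) * q⁻¹ ^ 2) • (c1 * d2)
  rc1 : r * c1 = (q⁻¹ ^ 2) • (c1 * r) + ((1 - q⁻¹ ^ 2) * q⁻¹ ^ 2) • (c2 * d1)
  rr : r * r = (q⁻¹ ^ 4) • w + (q⁻¹ ^ 4 + q⁻¹ ^ 6) • ((c2 : R) * d2)
        - (q⁻¹ ^ 4) • (c2 * d1 * d1) - (q⁻¹ ^ 4) • (c1 * c1 * d2)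
        + (q⁻¹ ^ 2) • (c1 * r * d1)
  wr : w * r = r * w
  wc1 : w * c1 = (q⁻¹ ^ 2) • (c1 * w)
  wc2 : w * c2 = (q⁻¹ ^ 4) • (c2 * w)
  wd1 : w * d1 = (q ^ 2) • (d1 * w)
  wd2 : w * d2 = (q ^ 4) • (d2 * w)

section QC
variable {R : Type} [Ring R] [Algebra ℂ R]

def QC (y x : R) : Prop := ∃ s : ℂ, s ≠ 0 ∧ y * x = s • (x * y)

theorem QC.mul {y x z : R} (h1 : QC y x) (h2 : QC y z) : QC y (x * z) := by
  obtain ⟨s, hs, h1⟩ := h1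
  obtain ⟨u, hu, h2⟩ := h2
  refine ⟨s * u, mul_ne_zero hs hu, ?_⟩
  rw [← mul_assoc, h1, smul_mul_assoc, mul_assoc, h2, mul_smul_comm, smul_smul, mul_assoc]

theorem QC.one (y : R) : QC y 1 := ⟨1, one_ne_zero, by simp⟩

theorem QC.pow {y x : R} (h : QC y x) (n : ℕ) : QC y (x ^ n) := by
  induction n with
  | zero => simpa using QC.one y
  | succ n ih => rw [pow_succ]; exact ih.mul h

theorem QC.symm {y x : R} (h : QC y x) : QC x y := by
  obtain ⟨s, hs, h⟩ := h
  exact ⟨s⁻¹, inv_ne_zero hs, by rw [h, smul_smul, inv_mul_cancel₀ hs, one_smul]⟩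

theorem QC.inv {y : R} {x : Rˣ} (h : QC y (x : R)) : QC y ((x⁻¹ : Rˣ) : R) := by
  obtain ⟨s, hs, h⟩ := h.symm
  refine ⟨s, hs, ?_⟩
  calc y * ((x⁻¹ : Rˣ) : R) = ((x⁻¹ : Rˣ) : R) * ((x : R) * y) * ((x⁻¹ : Rˣ) : R) := by
        rw [← mul_assoc, Units.inv_mul, one_mul]
    _ = s • (((x⁻¹ : Rˣ) : R) * y) := by
        rw [h, mul_smul_comm, smul_mul_assoc, ← mul_assoc, mul_assoc _ (x : R), Units.mul_inv,
          mul_one]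

theorem QC.zpow {y : R} {x : Rˣ} (h : QC y (x : R)) (n : ℤ) : QC y ((x ^ n : Rˣ) : R) := by
  cases n with
  | ofNat n => simpa using h.pow n
  | negSucc n =>
    rw [zpow_negSucc, ← inv_pow, Units.val_pow_eq_pow_val]
    exact h.inv.pow _

end QC

namespace BData
variable {R : Type} [Ring R] [Algebra ℂ R] {q : ℂ} (B : BData R q)

abbrev Idx : Type := ℕ × ℤ × ℕ × ℕ × ℤ

def tl (b : ℕ) (l : ℤ) : R := B.d1 ^ b * ((B.d2 ^ l : Rˣ) : R)

def fam : Idx → R := fun x =>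
  B.c1 ^ x.1 * (((B.c2 ^ x.2.1 : Rˣ) : R) * (B.r ^ x.2.2.1 * B.tl x.2.2.2.1 x.2.2.2.2))

def dg (x : Idx) : ℤ := x.2.2.1

def G (n : ℤ) : Submodule ℂ R := Submodule.span ℂ (B.fam '' {x | dg x < n})

theorem G_mono {m n : ℤ} (h : m ≤ n) : B.G m ≤ B.G n := by
  apply Submodule.span_mono
  apply Set.image_mono
  intro f hf
  exact lt_of_lt_of_le hf h

theorem fam_mem {x : Idx} {n : ℤ} (h : dg x < n) : B.fam x ∈ B.G n :=
  Submodule.subset_span ⟨x, h, rfl⟩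

theorem G_ind {y : R} {S : Submodule ℂ R} {n : ℤ} (h : ∀ x, dg x < n → y * B.fam x ∈ S)
    {v : R} (hv : v ∈ B.G n) : y * v ∈ S := by
  have : B.G n ≤ S.comap (LinearMap.mulLeft ℂ y) := by
    unfold G
    rw [Submodule.span_le]
    rintro _ ⟨x, hx, rfl⟩
    exact h x hx
  exact this hv

theorem c1_fam (a : ℕ) (k : ℤ) (n b : ℕ) (l : ℤ) :
    B.c1 * B.fam (a, k, n, b, l) = B.fam (a + 1, k, n, b, l) := by
  simp only [fam]; rw [pow_succ', mul_assoc]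

theorem c1_mem {n : ℤ} {v : R} (hv : v ∈ B.G n) : B.c1 * v ∈ B.G n := by
  refine B.G_ind ?_ hv
  rintro ⟨a, k, m, b, l⟩ hx
  rw [c1_fam]
  exact B.fam_mem hx

theorem c2_fam (j : ℤ) (a : ℕ) (k : ℤ) (n b : ℕ) (l : ℤ) :
    ((B.c2 ^ j : Rˣ) : R) * B.fam (a, k, n, b, l) = B.fam (a, j + k, n, b, l) := by
  have hc : Commute ((B.c2 ^ j : Rˣ) : R) (B.c1 ^ a) := by
    apply Commute.pow_right
    exact (show Commute B.c1 (B.c2 : R) from B.c2c1.symm).units_zpow_right j |>.symm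
  simp only [fam]
  rw [← mul_assoc, hc.eq, mul_assoc, zpow_add, Units.val_mul, mul_assoc (((B.c2 ^ j : Rˣ) : R))]

theorem c2_mem (j : ℤ) {n : ℤ} {v : R} (hv : v ∈ B.G n) : ((B.c2 ^ j : Rˣ) : R) * v ∈ B.G n := by
  refine B.G_ind ?_ hv
  rintro ⟨a, k, m, b, l⟩ hx
  rw [c2_fam]
  exact B.fam_mem hx

theorem c2_mem' {n : ℤ} {v : R} (hv : v ∈ B.G n) : (B.c2 : R) * v ∈ B.G n := by
  simpa using B.c2_mem 1 hv

theorem c1p_mem (a : ℕ) {n : ℤ} {v : R} (hv : v ∈ B.G n) : B.c1 ^ a * v ∈ B.G n := by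
  induction a with
  | zero => simpa using hv
  | succ a ih => rw [pow_succ', mul_assoc]; exact B.c1_mem ih

theorem qinv (hq : q ≠ 0) (n : ℕ) : q⁻¹ ^ n ≠ 0 := pow_ne_zero _ (inv_ne_zero hq)

theorem d2_tl (j : ℤ) (b : ℕ) (l : ℤ) : ((B.d2 ^ j : Rˣ) : R) * B.tl b l = B.tl b (j + l) := by
  have hc : Commute ((B.d2 ^ j : Rˣ) : R) (B.d1 ^ b) := by
    apply Commute.pow_right
    exact (show Commute B.d1 (B.d2 : R) from B.d2d1.symm).units_zpow_right j |>.symm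
  rw [tl, tl, ← mul_assoc, hc.eq, mul_assoc, zpow_add, Units.val_mul]

theorem d1_tl (b : ℕ) (l : ℤ) : B.d1 * B.tl b l = B.tl (b + 1) l := by
  rw [tl, tl, ← mul_assoc, pow_succ']

theorem d2_fam (hq : q ≠ 0) (j : ℤ) (a : ℕ) (k : ℤ) (n b : ℕ) (l : ℤ) :
    ∃ s : ℂ, ((B.d2 ^ j : Rˣ) : R) * B.fam (a, k, n, b, l) = s • B.fam (a, k, n, b, j + l) := by
  have h1 : QC (B.d2 : R) B.c1 := ⟨_, qinv hq 2, B.d2c1⟩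
  have h2 : QC (B.d2 : R) (B.c2 : R) := ⟨_, qinv hq 4, B.d2c2⟩
  have h3 : QC (B.d2 : R) B.r := ⟨_, qinv hq 2, B.d2r⟩
  have g1 : QC ((B.d2 ^ j : Rˣ) : R) B.c1 := (h1.symm.zpow j).symm
  have g2 : QC ((B.d2 ^ j : Rˣ) : R) (B.c2 : R) := (h2.symm.zpow j).symm
  have g3 : QC ((B.d2 ^ j : Rˣ) : R) B.r := (h3.symm.zpow j).symm
  obtain ⟨s, -, hs⟩ := ((g1.pow a).mul (g2.zpow k)).mul (g3.pow n)
  refine ⟨s, ?_⟩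
  have e : ∀ l, B.fam (a, k, n, b, l)
      = (B.c1 ^ a * ((B.c2 ^ k : Rˣ) : R) * B.r ^ n) * B.tl b l := by
    intro l; simp only [fam, mul_assoc]
  rw [e, ← mul_assoc, hs, smul_mul_assoc, mul_assoc, d2_tl, e]

theorem d2_mem (hq : q ≠ 0) (j : ℤ) {n : ℤ} {v : R} (hv : v ∈ B.G n) :
    ((B.d2 ^ j : Rˣ) : R) * v ∈ B.G n := by
  refine B.G_ind ?_ hv
  rintro ⟨a, k, m, b, l⟩ hx
  obtain ⟨s, hs⟩ := B.d2_fam hq j a k m b l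
  rw [hs]
  exact Submodule.smul_mem _ _ (B.fam_mem hx)

theorem d2_mem' (hq : q ≠ 0) {n : ℤ} {v : R} (hv : v ∈ B.G n) : (B.d2 : R) * v ∈ B.G n := by
  simpa using B.d2_mem hq 1 hv

theorem rt_mem (n b : ℕ) (l : ℤ) {m : ℤ} (h : (n : ℤ) < m) : B.r ^ n * B.tl b l ∈ B.G m := by
  have := B.fam_mem (x := (0, 0, n, b, l)) (n := m) h
  simpa [fam] using this

/-- `r` and `d₁` raise the filtration degree of monomials of degree `n` by at most one. -/
def PP (n : ℕ) : Prop := ∀ a k b l,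
  B.r * B.fam (a, k, n, b, l) ∈ B.G (n + 2) ∧ B.d1 * B.fam (a, k, n, b, l) ∈ B.G (n + 2)

def DD (n : ℕ) : Prop := ∀ b l, ∃ s : ℂ,
  B.d1 * (B.r ^ n * B.tl b l) - s • (B.r ^ n * B.tl (b + 1) l) ∈ B.G n

theorem PP_of_DD (hq : q ≠ 0) (n : ℕ) (h : B.DD n) : B.PP n := by
  intro a k b l
  induction a with
  | zero =>
    have e : B.fam (0, k, n, b, l) = ((B.c2 ^ k : Rˣ) : R) * (B.r ^ n * B.tl b l) := by
      simp [fam]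
    rw [e]
    constructor
    · obtain ⟨s, -, hs⟩ := (show QC B.r (B.c2 : R) from ⟨_, qinv hq 2, B.rc2⟩).zpow k
      rw [← mul_assoc, hs, smul_mul_assoc, mul_assoc, ← mul_assoc B.r, ← pow_succ']
      exact Submodule.smul_mem _ _ (B.c2_mem k (B.rt_mem _ _ _ (by push_cast; omega)))
    · obtain ⟨s, -, hs⟩ := (show QC B.d1 (B.c2 : R) from ⟨_, qinv hq 2, B.d1c2⟩).zpow k
      rw [← mul_assoc, hs, smul_mul_assoc, mul_assoc]
      apply Submodule.smul_mem
      apply B.c2_mem k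
      obtain ⟨u, hu⟩ := h b l
      have h2 : u • (B.r ^ n * B.tl (b + 1) l) ∈ B.G (n + 2) :=
        Submodule.smul_mem _ _ (B.rt_mem _ _ _ (by omega))
      have h3 := Submodule.add_mem _ (B.G_mono (by omega : (n : ℤ) ≤ n + 2) hu) h2
      simpa using h3
  | succ a ih =>
    obtain ⟨ih1, ih2⟩ := ih
    rw [← c1_fam]
    constructor
    · rw [← mul_assoc, B.rc1, add_mul, smul_mul_assoc, smul_mul_assoc, mul_assoc, mul_assoc]
      exact Submodule.add_mem _ (Submodule.smul_mem _ _ (B.c1_mem ih1))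
        (Submodule.smul_mem _ _ (B.c2_mem' ih2))
    · rw [← mul_assoc, B.d1c1, add_mul, smul_mul_assoc, mul_assoc]
      exact Submodule.add_mem _ (B.c1_mem ih2) (Submodule.smul_mem _ _ ih1)

theorem r_mem_of {n : ℤ} (h : ∀ m : ℕ, (m : ℤ) < n → B.PP m) {v : R} (hv : v ∈ B.G n) :
    B.r * v ∈ B.G (n + 1) := by
  refine B.G_ind ?_ hv
  rintro ⟨a, k, m, b, l⟩ hx
  have hx' : (m : ℤ) < n := hx
  exact B.G_mono (by omega) (h m hx' a k b l).1

theorem d1_mem_of {n : ℤ} (h : ∀ m : ℕ, (m : ℤ) < n → B.PP m) {v : R} (hv : v ∈ B.G n) :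
    B.d1 * v ∈ B.G (n + 1) := by
  refine B.G_ind ?_ hv
  rintro ⟨a, k, m, b, l⟩ hx
  have hx' : (m : ℤ) < n := hx
  exact B.G_mono (by omega) (h m hx' a k b l).2

theorem all_DD (hq : q ≠ 0) (n : ℕ) : B.DD n ∧ ∀ m < n, B.PP m := by
  induction n with
  | zero =>
    refine ⟨?_, by simp⟩
    intro b l
    refine ⟨1, ?_⟩
    simp [d1_tl]
  | succ n ih =>
    obtain ⟨hD, hP⟩ := ih
    have hPn := B.PP_of_DD hq n hD
    refine ⟨?_, ?_⟩
    · intro b l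
      obtain ⟨s, hs⟩ := hD b l
      refine ⟨q⁻¹ ^ 2 * s, ?_⟩
      have h1 := B.r_mem_of (n := n) (fun m hm => hP m (by omega)) hs
      have h2 : B.c1 * (B.d2 * (B.r ^ n * B.tl b l)) ∈ B.G (n + 1) :=
        B.c1_mem (B.d2_mem' hq (B.rt_mem _ _ _ (by omega)))
      have e : B.d1 * (B.r ^ (n + 1) * B.tl b l)
            - (q⁻¹ ^ 2 * s) • (B.r ^ (n + 1) * B.tl (b + 1) l)
          = (q⁻¹ ^ 2) • (B.r * (B.d1 * (B.r ^ n * B.tl b l) - s • (B.r ^ n * B.tl (b + 1) l)))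
            + ((1 - q⁻¹ ^ 2) * q⁻¹ ^ 2) • (B.c1 * (B.d2 * (B.r ^ n * B.tl b l))) := by
        have e1 : B.d1 * (B.r ^ (n + 1) * B.tl b l)
            = (B.d1 * B.r) * (B.r ^ n * B.tl b l) := by
          rw [pow_succ' B.r n]; simp only [mul_assoc]
        rw [e1, B.d1r, pow_succ' B.r n, add_mul, smul_mul_assoc, smul_mul_assoc, mul_sub,
          mul_smul_comm, smul_sub, smul_smul]
        simp only [mul_assoc]
        abel
      rw [e]
      push_cast
      exact Submodule.add_mem _ (Submodule.smul_mem _ _ h1) (Submodule.smul_mem _ _ h2)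
    · intro m hm
      rcases Nat.lt_succ_iff_lt_or_eq.1 hm with h | rfl
      · exact hP m h
      · exact hPn

theorem all_PP (hq : q ≠ 0) (n : ℕ) : B.PP n := (B.all_DD hq (n + 1)).2 n (Nat.lt_succ_self n)

theorem r_mem (hq : q ≠ 0) {n : ℤ} {v : R} (hv : v ∈ B.G n) : B.r * v ∈ B.G (n + 1) :=
  B.r_mem_of (fun m _ => B.all_PP hq m) hv

theorem d1_mem (hq : q ≠ 0) {n : ℤ} {v : R} (hv : v ∈ B.G n) : B.d1 * v ∈ B.G (n + 1) :=
  B.d1_mem_of (fun m _ => B.all_PP hq m) hv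

theorem w_eq (hq : q ≠ 0) : B.w = (q ^ 4) • (B.r * B.r)
    + (-(1 + q⁻¹ ^ 2)) • ((B.c2 : R) * B.d2) + B.c2 * B.d1 * B.d1 + B.c1 * B.c1 * B.d2
    + (-(q ^ 2)) • (B.c1 * B.r * B.d1) := by
  rw [B.rr]
  match_scalars <;> field_simp <;> ring

theorem w_rt (hq : q ≠ 0) (n b : ℕ) (l : ℤ) :
    B.w * (B.r ^ n * B.tl b l) - (q ^ 4) • (B.r ^ (n + 2) * B.tl b l) ∈ B.G (n + 2) := by
  have hm : B.r ^ n * B.tl b l ∈ B.G (n + 1) := B.rt_mem _ _ _ (by omega)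
  have hd : B.d1 * (B.r ^ n * B.tl b l) ∈ B.G (n + 1) := by
    obtain ⟨s, hs⟩ := (B.all_DD hq n).1 b l
    have h2 : s • (B.r ^ n * B.tl (b + 1) l) ∈ B.G (n + 1) :=
      Submodule.smul_mem _ _ (B.rt_mem _ _ _ (by omega))
    have h3 := Submodule.add_mem _ (B.G_mono (by omega : (n : ℤ) ≤ n + 1) hs) h2
    simpa using h3
  have e : (n : ℤ) + 2 = n + 1 + 1 := by ring
  have t1 : B.c2 * (B.d2 * (B.r ^ n * B.tl b l)) ∈ B.G (n + 2) :=
    B.G_mono (by omega) (B.c2_mem' (B.d2_mem' hq hm))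
  have t2 : B.c2 * (B.d1 * (B.d1 * (B.r ^ n * B.tl b l))) ∈ B.G (n + 2) := by
    rw [e]; exact B.c2_mem' (B.d1_mem hq hd)
  have t3 : B.c1 * (B.c1 * (B.d2 * (B.r ^ n * B.tl b l))) ∈ B.G (n + 2) :=
    B.G_mono (by omega) (B.c1_mem (B.c1_mem (B.d2_mem' hq hm)))
  have t4 : B.c1 * (B.r * (B.d1 * (B.r ^ n * B.tl b l))) ∈ B.G (n + 2) := by
    rw [e]; exact B.c1_mem (B.r_mem hq hd)
  have e2 : B.w * (B.r ^ n * B.tl b l) - (q ^ 4) • (B.r ^ (n + 2) * B.tl b l)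
      = (-(1 + q⁻¹ ^ 2)) • (B.c2 * (B.d2 * (B.r ^ n * B.tl b l)))
        + B.c2 * (B.d1 * (B.d1 * (B.r ^ n * B.tl b l)))
        + B.c1 * (B.c1 * (B.d2 * (B.r ^ n * B.tl b l)))
        + (-(q ^ 2)) • (B.c1 * (B.r * (B.d1 * (B.r ^ n * B.tl b l)))) := by
    rw [B.w_eq hq, pow_succ' B.r (n + 1), pow_succ' B.r n]
    simp only [add_mul, smul_mul_assoc, mul_assoc]
    abel
  rw [e2]
  exact Submodule.add_mem _ (Submodule.add_mem _ (Submodule.add_mem _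
    (Submodule.smul_mem _ _ t1) t2) t3) (Submodule.smul_mem _ _ t4)

theorem w_fam (hq : q ≠ 0) (a : ℕ) (k : ℤ) (n b : ℕ) (l : ℤ) : ∃ u : ℂ, u ≠ 0 ∧
    B.w * B.fam (a, k, n, b, l) - u • B.fam (a, k, n + 2, b, l) ∈ B.G (n + 2) := by
  have h1 : QC B.w B.c1 := ⟨_, qinv hq 2, B.wc1⟩
  have h2 : QC B.w (B.c2 : R) := ⟨_, qinv hq 4, B.wc2⟩
  obtain ⟨s, hs0, hs⟩ := (h1.pow a).mul (h2.zpow k)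
  refine ⟨s * q ^ 4, mul_ne_zero hs0 (pow_ne_zero _ hq), ?_⟩
  have e : ∀ n, B.fam (a, k, n, b, l)
      = (B.c1 ^ a * ((B.c2 ^ k : Rˣ) : R)) * (B.r ^ n * B.tl b l) := by
    intro n; simp only [fam, mul_assoc]
  have e2 : B.w * B.fam (a, k, n, b, l) - (s * q ^ 4) • B.fam (a, k, n + 2, b, l)
      = s • (B.c1 ^ a * (((B.c2 ^ k : Rˣ) : R) * (B.w * (B.r ^ n * B.tl b l)
          - (q ^ 4) • (B.r ^ (n + 2) * B.tl b l)))) := by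
    rw [e, e, ← mul_assoc, hs, smul_mul_assoc, mul_smul, ← smul_sub]
    simp only [mul_sub, mul_smul_comm, mul_assoc]
  rw [e2]
  exact Submodule.smul_mem _ _ (B.c1p_mem a (B.c2_mem k (B.w_rt hq n b l)))

theorem w_mem (hq : q ≠ 0) {n : ℤ} {v : R} (hv : v ∈ B.G n) : B.w * v ∈ B.G (n + 2) := by
  refine B.G_ind ?_ hv
  rintro ⟨a, k, m, b, l⟩ hx
  have hx' : (m : ℤ) < n := hx
  obtain ⟨u, -, hu⟩ := B.w_fam hq a k m b l
  have h2 : u • B.fam (a, k, m + 2, b, l) ∈ B.G (n + 2) :=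
    Submodule.smul_mem _ _ (B.fam_mem (by simp only [dg]; push_cast; omega))
  have h3 := Submodule.add_mem _ (B.G_mono (by omega : (m : ℤ) + 2 ≤ n + 2) hu) h2
  simpa using h3

theorem wp_fam (hq : q ≠ 0) (a : ℕ) (k : ℤ) (n b : ℕ) (l : ℤ) (c : ℕ) : ∃ u : ℂ, u ≠ 0 ∧
    B.w ^ c * B.fam (a, k, n, b, l) - u • B.fam (a, k, n + 2 * c, b, l)
      ∈ B.G (((n + 2 * c : ℕ) : ℤ)) := by
  induction c with
  | zero => exact ⟨1, one_ne_zero, by simp⟩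
  | succ c ih =>
    obtain ⟨u, hu0, hu⟩ := ih
    obtain ⟨v, hv0, hv⟩ := B.w_fam hq a k (n + 2 * c) b l
    refine ⟨u * v, mul_ne_zero hu0 hv0, ?_⟩
    have h1 := B.w_mem hq hu
    have e : B.w ^ (c + 1) * B.fam (a, k, n, b, l)
          - (u * v) • B.fam (a, k, n + 2 * (c + 1), b, l)
        = B.w * (B.w ^ c * B.fam (a, k, n, b, l) - u • B.fam (a, k, n + 2 * c, b, l))
          + u • (B.w * B.fam (a, k, n + 2 * c, b, l) - v • B.fam (a, k, n + 2 * c + 2, b, l)) := by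
      rw [pow_succ', mul_sub, smul_sub, mul_smul_comm, mul_smul, mul_assoc, mul_add, mul_one,
        ← add_assoc]
      abel
    have e3 : ((n + 2 * (c + 1) : ℕ) : ℤ) = ((n + 2 * c : ℕ) : ℤ) + 2 := by push_cast; ring
    rw [e, e3]
    exact Submodule.add_mem _ h1 (Submodule.smul_mem _ _ hv)

def pbw (x : ℕ × ℤ × Fin 2 × ℕ × ℤ × ℕ) : R :=
  B.c1 ^ x.1 * ((B.c2 ^ x.2.1 : Rˣ) : R) * B.r ^ (x.2.2.1 : ℕ) *
    B.d1 ^ x.2.2.2.1 * ((B.d2 ^ x.2.2.2.2.1 : Rˣ) : R) * B.w ^ x.2.2.2.2.2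

def phi (x : ℕ × ℤ × Fin 2 × ℕ × ℤ × ℕ) : Idx :=
  (x.1, x.2.1, (x.2.2.1 : ℕ) + 2 * x.2.2.2.2.2, x.2.2.2.1, x.2.2.2.2.1)

theorem phi_inj : Function.Injective phi := by
  rintro ⟨a, k, e, b, l, c⟩ ⟨a', k', e', b', l', c'⟩ h
  simp only [phi, Prod.mk.injEq] at h
  obtain ⟨h1, h2, h3, h4, h5⟩ := h
  have he := e.2
  have he' := e'.2
  have h6 : e = e' := Fin.ext (by omega)
  have h7 : c = c' := by omega
  subst h1 h2 h4 h5 h6 h7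
  rfl

theorem pbw_lead (hq : q ≠ 0) (x : ℕ × ℤ × Fin 2 × ℕ × ℤ × ℕ) : ∃ u : ℂ, u ≠ 0 ∧
    B.pbw x - u • B.fam (phi x) ∈ Submodule.span ℂ (B.fam '' {y | dg y < dg (phi x)}) := by
  obtain ⟨a, k, e, b, l, c⟩ := x
  have h1 : QC B.w B.c1 := ⟨_, qinv hq 2, B.wc1⟩
  have h2 : QC B.w (B.c2 : R) := ⟨_, qinv hq 4, B.wc2⟩
  have h3 : QC B.w B.r := ⟨1, one_ne_zero, by rw [one_smul]; exact B.wr⟩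
  have h4 : QC B.w B.d1 := ⟨_, pow_ne_zero 2 hq, B.wd1⟩
  have h5 : QC B.w (B.d2 : R) := ⟨_, pow_ne_zero 4 hq, B.wd2⟩
  have hall := ((((h1.pow a).mul (h2.zpow k)).mul (h3.pow (e : ℕ))).mul (h4.pow b)).mul (h5.zpow l)
  obtain ⟨s, hs0, hs⟩ := hall.symm.pow c
  obtain ⟨u, hu0, hu⟩ := B.wp_fam hq a k e b l c
  refine ⟨s * u, mul_ne_zero hs0 hu0, ?_⟩
  have e1 : B.pbw (a, k, e, b, l, c) = s • (B.w ^ c * B.fam (a, k, e, b, l)) := by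
    simp only [pbw, fam, tl]
    rw [hs]
    simp only [mul_assoc]
  rw [e1, mul_smul, ← smul_sub]
  exact Submodule.smul_mem _ _ hu

theorem pbw_li (hq : q ≠ 0) (h : LinearIndependent ℂ B.fam) : LinearIndependent ℂ B.pbw :=
  tri B.fam h B.pbw phi phi_inj dg (B.pbw_lead hq)

/-- The span of all monomials. -/
def S : Submodule ℂ R := Submodule.span ℂ (Set.range B.fam)

theorem G_le_S (n : ℤ) : B.G n ≤ B.S := Submodule.span_mono (Set.image_subset_range _ _)

theorem S_ind {y : R} (h : ∀ n : ℤ, ∃ m : ℤ, ∀ v ∈ B.G n, y * v ∈ B.G m)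
    {v : R} (hv : v ∈ B.S) : y * v ∈ B.S := by
  have : B.S ≤ B.S.comap (LinearMap.mulLeft ℂ y) := by
    conv_lhs => unfold S
    rw [Submodule.span_le]
    rintro _ ⟨x, rfl⟩
    obtain ⟨m, hm⟩ := h (dg x + 1)
    exact B.G_le_S m (hm _ (B.fam_mem (by omega)))
  exact this hv

theorem one_mem_S : (1 : R) ∈ B.S :=
  Submodule.subset_span ⟨(0, 0, 0, 0, 0), by simp [fam, tl]⟩

end BData

/-! ### The presented algebra -/

theorem brel {q : ℂ} {x y : FB} (h : BRel q x y) :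
    RingQuot.mkAlgHom ℂ (BRel q) x = RingQuot.mkAlgHom ℂ (BRel q) y :=
  RingQuot.mkAlgHom_rel ℂ h

theorem brel_one {q : ℂ} {x y : FB} (h : BRel q (x * y) 1) :
    RingQuot.mkAlgHom ℂ (BRel q) x * RingQuot.mkAlgHom ℂ (BRel q) y = 1 := by
  rw [← map_mul, brel h, map_one]

def uc2 (q : ℂ) : (AlgB q)ˣ :=
  ⟨bc2 q, bc2i q, brel_one (BRel.c2c2i (q := q)),
    brel_one (BRel.c2ic2 (q := q))⟩

def ud2 (q : ℂ) : (AlgB q)ˣ :=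
  ⟨bd2 q, bd2i q, brel_one (BRel.d2d2i (q := q)),
    brel_one (BRel.d2id2 (q := q))⟩

def BD (q : ℂ) : BData (AlgB q) q where
  c1 := bc1 q
  c2 := uc2 q
  d1 := bd1 q
  d2 := ud2 q
  r := br q
  w := bw q
  c2c1 := by
    have h := brel (BRel.c2c1 (q := q))
    simp only [map_mul] at h
    exact h
  d2d1 := by
    have h := brel (BRel.d2d1 (q := q))
    simp only [map_mul] at h
    exact h
  d2c2 := by
    have h := brel (BRel.d2c2 (q := q))
    simp only [map_mul, map_smul] at h
    exact h
  d2c1 := by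
    have h := brel (BRel.d2c1 (q := q))
    simp only [map_mul, map_smul] at h
    exact h
  d1c2 := by
    have h := brel (BRel.d1c2 (q := q))
    simp only [map_mul, map_smul] at h
    exact h
  d1c1 := by
    have h := brel (BRel.d1c1 (q := q))
    simp only [map_mul, map_smul, map_add] at h
    exact h
  d2r := by
    have h := brel (BRel.d2r (q := q))
    simp only [map_mul, map_smul] at h
    exact h
  rc2 := by
    have h := brel (BRel.rc2 (q := q))
    simp only [map_mul, map_smul] at h
    exact h
  d1r := by
    have h := brel (BRel.d1r (q := q))
    simp only [map_mul, map_smul, map_add] at h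
    exact h
  rc1 := by
    have h := brel (BRel.rc1 (q := q))
    simp only [map_mul, map_smul, map_add] at h
    exact h
  rr := by
    have h := brel (BRel.rr (q := q))
    simp only [map_mul, map_smul, map_add, map_sub] at h
    exact h
  wr := by
    have h := brel (BRel.wr (q := q))
    simp only [map_mul] at h
    exact h
  wc1 := by
    have h := brel (BRel.wc1 (q := q))
    simp only [map_mul, map_smul] at h
    exact h
  wc2 := by
    have h := brel (BRel.wc2 (q := q))
    simp only [map_mul, map_smul] at h
    exact h
  wd1 := by
    have h := brel (BRel.wd1 (q := q))
    simp only [map_mul, map_smul] at h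
    exact h
  wd2 := by
    have h := brel (BRel.wd2 (q := q))
    simp only [map_mul, map_smul] at h
    exact h

theorem zp_units {M : Type*} [Monoid M] (u : Mˣ) (k : ℤ) :
    zp (u : M) ((u⁻¹ : Mˣ) : M) k = ((u ^ k : Mˣ) : M) := by
  cases k with
  | ofNat n => simp [zp]
  | negSucc n => rw [zpow_negSucc, ← inv_pow, Units.val_pow_eq_pow_val]; rfl

theorem map_zp {M N : Type*} [Monoid M] [Monoid N] (f : M →* N) (x xi : M) (k : ℤ) :
    f (zp x xi k) = zp (f x) (f xi) k := by
  cases k with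
  | ofNat n => simp [zp]
  | negSucc n => simp [zp]

theorem pbwB_eq (q : ℂ) : pbwB q = (BD q).pbw := by
  funext x
  simp only [pbwB, BData.pbw]
  rw [← zp_units, ← zp_units]
  rfl

theorem S_top (q : ℂ) (hq : q ≠ 0) (x : AlgB q) : x ∈ (BD q).S := by
  have key : ∀ y : FB, ∀ v ∈ (BD q).S, RingQuot.mkAlgHom ℂ (BRel q) y * v ∈ (BD q).S := by
    intro y
    induction y using FreeAlgebra.induction with
    | grade0 c =>
      intro v hv
      rw [AlgHom.commutes, ← Algebra.smul_def]
      exact Submodule.smul_mem _ _ hv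
    | grade1 g =>
      intro v hv
      refine (BD q).S_ind ?_ hv
      intro n
      cases g with
      | c1 => exact ⟨n, fun v hv => (BD q).c1_mem hv⟩
      | c2 => exact ⟨n, fun v hv => (BD q).c2_mem' hv⟩
      | c2i => exact ⟨n, fun v hv => by
        have h := (BD q).c2_mem (-1) hv
        rw [zpow_neg_one] at h
        exact h⟩
      | d1 => exact ⟨n + 1, fun v hv => (BD q).d1_mem hq hv⟩
      | d2 => exact ⟨n, fun v hv => (BD q).d2_mem' hq hv⟩
      | d2i => exact ⟨n, fun v hv => by
        have h := (BD q).d2_mem hq (-1) hv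
        rw [zpow_neg_one] at h
        exact h⟩
      | r => exact ⟨n + 1, fun v hv => (BD q).r_mem hq hv⟩
      | w => exact ⟨n + 2, fun v hv => (BD q).w_mem hq hv⟩
    | mul a b ha hb =>
      intro v hv
      rw [map_mul, mul_assoc]
      exact ha _ (hb _ hv)
    | add a b ha hb =>
      intro v hv
      rw [map_add, add_mul]
      exact Submodule.add_mem _ (ha _ hv) (hb _ hv)
  obtain ⟨y, rfl⟩ := RingQuot.mkAlgHom_surjective ℂ (BRel q) x
  have := key y 1 (BD q).one_mem_S
  rwa [mul_one] at this

def ex (x : BData.Idx) : EE :=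
  x.1 • ec1 + (x.2.1 • ec2 + (x.2.2.1 • er + (x.2.2.2.1 • ed1 + x.2.2.2.2 • ed2)))

theorem ex_inj : Function.Injective ex := by
  rintro ⟨a, k, n, b, l⟩ ⟨a', k', n', b', l'⟩ h
  simp only [ex, ec1, ec2, er, ed1, ed2, Prod.smul_mk, Prod.mk_add_mk, Prod.mk.injEq,
    nsmul_eq_mul, smul_eq_mul, mul_zero, mul_one, mul_neg, add_zero, zero_add] at h
  simp only [Prod.mk.injEq]
  omega

theorem lead_fam {E : Type} [Ring E] [Algebra ℂ E] (T : EE → E) (q : ℂ) (hq : q ≠ 0)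
    (hT : ∀ e f, T e * T f = ((q ^ 2) ^ (bet e f)) • T (e + f)) (hT0 : T 0 = 1)
    (Θ : AlgB q →ₐ[ℂ] E)
    (h1 : HasLead T (Θ (bc1 q)) ec1) (h2 : Θ (bc2 q) = T ec2)
    (h3 : HasLead T (Θ (bd1 q)) ed1) (h4 : Θ (bd2 q) = T ed2)
    (h5 : HasLead T (Θ (br q)) er) (x : BData.Idx) :
    HasLead T (Θ ((BD q).fam x)) (ex x) := by
  have i2 : Θ (bc2i q) = T (-ec2) := by
    apply TT_inv T q hT hT0 ec2 (by simp [bet, ec2])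
    rw [← h2, ← map_mul]
    have : bc2i q * bc2 q = 1 := (uc2 q).inv_mul
    rw [this, map_one]
  have i4 : Θ (bd2i q) = T (-ed2) := by
    apply TT_inv T q hT hT0 ed2 (by simp [bet, ed2])
    rw [← h4, ← map_mul]
    have : bd2i q * bd2 q = 1 := (ud2 q).inv_mul
    rw [this, map_one]
  have z2 : ∀ k : ℤ, HasLead T (Θ (((BD q).c2 ^ k : (AlgB q)ˣ) : AlgB q)) (k • ec2) := by
    intro k
    rw [← zp_units]
    have e := map_zp (Θ : AlgB q →* E) (bc2 q) (bc2i q) k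
    have l1 := HasLead.zp hq hT hT0 (HasLead.TT T ec2) (HasLead.TT T (-ec2)) k
    rw [← h2, ← i2] at l1
    have e' : Θ (zp (bc2 q) (bc2i q) k) = zp (Θ (bc2 q)) (Θ (bc2i q)) k := e
    rw [← e'] at l1
    exact l1
  have z4 : ∀ k : ℤ, HasLead T (Θ (((BD q).d2 ^ k : (AlgB q)ˣ) : AlgB q)) (k • ed2) := by
    intro k
    rw [← zp_units]
    have e := map_zp (Θ : AlgB q →* E) (bd2 q) (bd2i q) k
    have l1 := HasLead.zp hq hT hT0 (HasLead.TT T ed2) (HasLead.TT T (-ed2)) k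
    rw [← h4, ← i4] at l1
    have e' : Θ (zp (bd2 q) (bd2i q) k) = zp (Θ (bd2 q)) (Θ (bd2i q)) k := e
    rw [← e'] at l1
    exact l1
  obtain ⟨a, k, n, b, l⟩ := x
  simp only [BData.fam, BData.tl, map_mul, map_pow, ex]
  exact (h1.pow hq hT hT0 a).mul hq hT ((z2 k).mul hq hT ((h5.pow hq hT hT0 n).mul hq hT
    ((h3.pow hq hT hT0 b).mul hq hT (z4 l))))

/-- The images under `Ψ̄` of the monomials
`c₁^{a₁}c₂^{a₂}r^{ε}d₁^{b₁}d₂^{b₂}w^{c}`, with `a₁, b₁, c ∈ ℕ₀`, `a₂, b₂ ∈ ℤ` and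
`ε ∈ {0,1}`, are linearly independent over ℂ in `𝒟q(GL₂)`; in particular the
homomorphism `Ψ̄ : ℬ → 𝒟q(GL₂)` (determined by its prescribed values on the
generators `c₁, c₂, d₁, d₂, r, w`) is injective. -/
theorem stmt18 (q : ℂ) (hq : q ≠ 0) (Ψ : AlgB q →ₐ[ℂ] DqLoc q)
    (h1 : Ψ (bc1 q) = c1El q) (h2 : Ψ (bc2 q) = detA q)
    (h3 : Ψ (bd1 q) = d1El q) (h4 : Ψ (bd2 q) = detD q)
    (h5 : Ψ (br q) = rEl q) (h6 : Ψ (bw q) = wEl q) :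
    LinearIndependent ℂ (fun x => Ψ (pbwB q x)) ∧ Function.Injective Ψ := by
  obtain ⟨E, _, _, T, hT, hT0, hTli⟩ := exists_torus q hq
  have hli0 : LinearIndependent ℂ (fun x => ((Phi T q hq hT hT0).comp Ψ) ((BD q).fam x)) := by
    refine tri T hTli _ ex ex_inj ell ?_
    intro x
    refine lead_fam T q hq hT hT0 ((Phi T q hq hT hT0).comp Ψ) ?_ ?_ ?_ ?_ ?_ x
    · rw [AlgHom.comp_apply, h1]; exact lead_c1 T q hq hT hT0
    · rw [AlgHom.comp_apply, h2]; exact Phi_detA T q hq hT hT0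
    · rw [AlgHom.comp_apply, h3]; exact lead_d1 T q hq hT hT0
    · rw [AlgHom.comp_apply, h4]; exact Phi_detD T q hq hT hT0
    · rw [AlgHom.comp_apply, h5]; exact lead_r T q hq hT hT0
  have hli1 : LinearIndependent ℂ (fun x => Ψ ((BD q).fam x)) :=
    LinearIndependent.of_comp (Phi T q hq hT hT0).toLinearMap hli0
  have hli2 : LinearIndependent ℂ (BD q).fam :=
    LinearIndependent.of_comp Ψ.toLinearMap hli1
  have hinj : Function.Injective Ψ := by
    rw [injective_iff_map_eq_zero]
    intro v hv
    obtain ⟨c, rfl⟩ := Finsupp.mem_span_range_iff_exists_finsupp.1 (S_top q hq v)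
    rw [linearIndependent_iff] at hli1
    have hc : c = 0 := by
      apply hli1
      rw [Finsupp.linearCombination_apply]
      rw [Finsupp.sum, map_sum] at hv
      simpa only [Finsupp.sum, map_smul] using hv
    rw [hc, Finsupp.sum_zero_index]
  refine ⟨?_, hinj⟩
  rw [pbwB_eq]
  exact ((BD q).pbw_li hq hli2).map' Ψ.toLinearMap (LinearMap.ker_eq_bot.2 hinj)
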